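/- arXiv:2601.13906 — 2 statements merged into one kernel-verified Lean document; each statement's English description precedes it below -/
import Mathlib

section
/- For every r ≥ 2 and every mismatched pair {P, Q} of distinct r-patterns, any two distinct {P, Q}-cliques of the same size k whose edges partition [rk] have distinct traces (i.e., the family of {P, Q}-cliques is reconstructible from traces). -/
open Finset
open scoped Classical

/-- An ordered `r`-matching of size `n`: a partition of `[r*n] = {1,…,r*n}` into `n`
pairwise disjoint `r`-element subsets (the edges). -/
def IsOrderedMatching (r n : ℕ) (M : Finset (Finset ℕ)) : Prop :=
  M.card = n ∧ (∀ e ∈ M, e.card = r) ∧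
  (∀ e ∈ M, ∀ f ∈ M, e ≠ f → Disjoint e f) ∧
  M.biUnion id = Finset.Icc 1 (r * n)

/-- Two disjoint `r`-element sets `e`, `f` form the `r`-pattern `P`: the unique
order-preserving bijection from `e ∪ f` onto `[2r]` maps the pair `{e, f}` onto `P`. -/
def FormsPattern (r : ℕ) (e f : Finset ℕ) (P : Finset (Finset ℕ)) : Prop :=
  ∃ φ : ℕ → ℕ, StrictMonoOn φ ↑(e ∪ f) ∧
    (e ∪ f).image φ = Finset.Icc 1 (2 * r) ∧
    ({e.image φ, f.image φ} : Finset (Finset ℕ)) = P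

/-- A `Ps`-clique: a family of pairwise disjoint `r`-element subsets of `ℕ`, every two of
which form a pattern belonging to `Ps`. -/
def IsClique (r : ℕ) (Ps : Set (Finset (Finset ℕ))) (K : Finset (Finset ℕ)) : Prop :=
  (∀ e ∈ K, e.card = r) ∧ (∀ e ∈ K, ∀ f ∈ K, e ≠ f → Disjoint e f) ∧
  (∀ e ∈ K, ∀ f ∈ K, e ≠ f → ∃ P ∈ Ps, FormsPattern r e f P)

/-- `z_Ps(M)`: the maximum size of a subfamily of `M` that is a `Ps`-clique. -/
noncomputable def zClique (r : ℕ) (Ps : Set (Finset (Finset ℕ))) (M : Finset (Finset ℕ)) : ℕ :=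
  sSup {k | ∃ K : Finset (Finset ℕ), K ⊆ M ∧ IsClique r Ps K ∧ K.card = k}

/-- All ordered `r`-matchings of size `n` (as a finset). -/
noncomputable def matchingFamilies (r n : ℕ) : Finset (Finset (Finset ℕ)) :=
  ((Finset.Icc 1 (r * n)).powerset.powerset).filter (IsOrderedMatching r n)

/-- The probability of the event `A` for a uniformly random ordered `r`-matching of size `n`. -/
noncomputable def prob (r n : ℕ) (A : Finset (Finset ℕ) → Prop) : ℝ :=
  (((matchingFamilies r n).filter A).card : ℝ) / ((matchingFamilies r n).card : ℝ)

/-- Expectation of `X` with respect to a uniformly random ordered `r`-matching of size `n`. -/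
noncomputable def expect (r n : ℕ) (X : Finset (Finset ℕ) → ℝ) : ℝ :=
  (∑ M ∈ matchingFamilies r n, X M) / ((matchingFamilies r n).card : ℝ)

/-- An `r`-partite `r`-pattern: each edge contains exactly one of `{2i-1, 2i}` for each
`i = 1, …, r`. -/
def IsPartitePattern (r : ℕ) (P : Finset (Finset ℕ)) : Prop :=
  IsOrderedMatching r 2 P ∧
  ∀ e ∈ P, ∀ i ∈ Finset.Icc 1 r, (e ∩ {2 * i - 1, 2 * i}).card = 1

/-- An `r`-pattern `P` is collectable if there exist arbitrarily large `{P}`-cliques. -/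
def Collectable (r : ℕ) (P : Finset (Finset ℕ)) : Prop :=
  ∀ k : ℕ, ∃ K : Finset (Finset ℕ), IsClique r {P} K ∧ K.card = k

/-- The word of a pattern `P` over `{A=true, B=false}`: the `j`-th letter is `true` iff
vertex `j` lies in the edge of `P` containing `1`. -/
noncomputable def patternWord (r : ℕ) (P : Finset (Finset ℕ)) : List Bool :=
  (List.range (2 * r)).map (fun j => decide (∃ e ∈ P, 1 ∈ e ∧ j + 1 ∈ e))

/-- `lam` is a splitting of the word `w` into consecutive blocks of the form
`A^t B^t` or `B^t A^t` with half-lengths given by `lam`. -/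
def IsBlockSplitting (w : List Bool) (lam : List ℕ) : Prop :=
  (∀ t ∈ lam, 1 ≤ t) ∧
  ∃ bs : List Bool, bs.length = lam.length ∧
    w = (List.zipWith (fun t b => List.replicate t b ++ List.replicate t !b) lam bs).flatten

/-- The pattern `P` has composition `lam` (the sequence of half-lengths of the blocks of
its unique splitting). -/
def HasComposition (r : ℕ) (P : Finset (Finset ℕ)) (lam : List ℕ) : Prop :=
  IsBlockSplitting (patternWord r P) lam

/-- Two distinct collectable `r`-patterns are harmonious if they have the same composition. -/
def Harmonious (r : ℕ) (P Q : Finset (Finset ℕ)) : Prop :=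
  P ≠ Q ∧ Collectable r P ∧ Collectable r Q ∧
  ∃ lam : List ℕ, HasComposition r P lam ∧ HasComposition r Q lam

/-- A pair of distinct `r`-patterns is a mismatch if exactly one of them is collectable, or
both are collectable but their compositions differ. -/
def Mismatch (r : ℕ) (P Q : Finset (Finset ℕ)) : Prop :=
  P ≠ Q ∧
  ((Collectable r P ∧ ¬ Collectable r Q) ∨
   (¬ Collectable r P ∧ Collectable r Q) ∨
   (Collectable r P ∧ Collectable r Q ∧
     ¬ ∃ lam : List ℕ, HasComposition r P lam ∧ HasComposition r Q lam))

/-- The trace of an ordered `r`-matching of size `k` on `[rk]`: the `j`-th letter equals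
`i` when `j` is the `i`-th smallest element of the edge containing `j`. -/
noncomputable def trace (r k : ℕ) (M : Finset (Finset ℕ)) : List ℕ :=
  (List.range (r * k)).map (fun j₀ =>
    ((Finset.Icc 1 (r * k)).filter
      (fun x => x ≤ j₀ + 1 ∧ ∃ e ∈ M, j₀ + 1 ∈ e ∧ x ∈ e)).card)

/-- `a_Ps(k)`: the number of `Ps`-cliques of size `k` whose edges partition `[rk]`. -/
noncomputable def cliqueCount (r : ℕ) (Ps : Set (Finset (Finset ℕ))) (k : ℕ) : ℕ :=
  (((Finset.Icc 1 (r * k)).powerset.powerset).filter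
    (fun M => IsOrderedMatching r k M ∧ IsClique r Ps M)).card

/-- The maximum size of any `Ps`-clique whatsoever. -/
noncomputable def maxCliqueSize (r : ℕ) (Ps : Set (Finset (Finset ℕ))) : ℕ :=
  sSup {k | ∃ K : Finset (Finset ℕ), IsClique r Ps K ∧ K.card = k}

/-- `M` contains a copy of the ordered `r`-matching `H` of size `k`: a subfamily `N ⊆ M` of
`k` edges such that the order-preserving bijection from the union of the edges of `N`
onto `[rk]` maps `N` onto `H`. -/
def ContainsCopy (r k : ℕ) (H M : Finset (Finset ℕ)) : Prop :=
  ∃ N ⊆ M, N.card = k ∧ ∃ φ : ℕ → ℕ,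
    StrictMonoOn φ ↑(N.biUnion id) ∧
    (N.biUnion id).image φ = Finset.Icc 1 (r * k) ∧
    N.image (fun e => e.image φ) = H

/-- Delete the `j`-th smallest element of the finite set `e`. -/
def deleteJth (j : ℕ) (e : Finset ℕ) : Finset ℕ :=
  e.filter (fun x => (e.filter (· ≤ x)).card ≠ j)

/-- Relabel the elements of `e` order-preservingly by their ranks in `V`. -/
def relabel (V : Finset ℕ) (e : Finset ℕ) : Finset ℕ :=
  e.image (fun x => (V.filter (· ≤ x)).card)

/-- `S^(−j)`: delete from each edge of the pattern `S` its `j`-th smallest element and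
relabel the remaining vertices order-preservingly. -/
def patternDelete (j : ℕ) (S : Finset (Finset ℕ)) : Finset (Finset ℕ) :=
  (S.image (deleteJth j)).image (relabel ((S.image (deleteJth j)).biUnion id))


noncomputable def en (r : ℕ) (e : Finset ℕ) (i : Fin r) : ℕ :=
  if h : e.card = r then e.orderEmbOfFin h i else 0

lemma en_strictMono {r : ℕ} {e : Finset ℕ} (h : e.card = r) : StrictMono (en r e) := by
  intro i j hij
  simp only [en, dif_pos h]
  exact (e.orderEmbOfFin h).strictMono hij

lemma en_mem {r : ℕ} {e : Finset ℕ} (h : e.card = r) (i : Fin r) : en r e i ∈ e := by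
  simp only [en, dif_pos h]
  exact e.orderEmbOfFin_mem h i

lemma en_surj {r : ℕ} {e : Finset ℕ} (h : e.card = r) {x : ℕ} (hx : x ∈ e) :
    ∃ i, en r e i = x := by
  have := e.range_orderEmbOfFin h
  have hx' : x ∈ Set.range (e.orderEmbOfFin h) := by rw [this]; exact hx
  obtain ⟨i, hi⟩ := hx'
  exact ⟨i, by simp only [en, dif_pos h]; exact hi⟩

lemma en_unique {r : ℕ} {e : Finset ℕ} (h : e.card = r) {f : Fin r → ℕ}
    (hf : ∀ i, f i ∈ e) (hm : StrictMono f) : f = en r e := by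
  have := Finset.orderEmbOfFin_unique h hf hm
  rw [this]
  funext i
  simp [en, dif_pos h]

def Ty (r : ℕ) (e f : Finset ℕ) (i j : Fin r) : Prop := en r e i < en r f j

def SepT {r : ℕ} (T : Fin r → Fin r → Prop) (i j : Fin r) : Prop := T j i ∨ ¬ T i j

lemma en_ne {r : ℕ} {e f : Finset ℕ} (he : e.card = r) (hf : f.card = r) (hd : Disjoint e f)
    (i j : Fin r) : en r e i ≠ en r f j := by
  intro h
  exact (Finset.disjoint_left.mp hd) (en_mem he i) (h ▸ en_mem hf j)

lemma Ty_swap {r : ℕ} {e f : Finset ℕ} (he : e.card = r) (hf : f.card = r) (hd : Disjoint e f)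
    (i j : Fin r) : Ty r f e i j ↔ ¬ Ty r e f j i := by
  have := en_ne he hf hd j i
  simp only [Ty]; omega

lemma Sep_swap {r : ℕ} {e f : Finset ℕ} (he : e.card = r) (hf : f.card = r) (hd : Disjoint e f)
    (i j : Fin r) : SepT (Ty r f e) i j ↔ SepT (Ty r e f) i j := by
  simp only [SepT, Ty_swap he hf hd]; tauto

lemma Ty_mono {r : ℕ} {e f : Finset ℕ} (he : e.card = r) (hf : f.card = r)
    {i i' j j' : Fin r} (hi : i' ≤ i) (hj : j ≤ j') (h : Ty r e f i j) : Ty r e f i' j' := by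
  have h1 := (en_strictMono he).monotone hi
  have h2 := (en_strictMono hf).monotone hj
  simp only [Ty] at *; omega

lemma forms_T {r : ℕ} {e f p q : Finset ℕ} (he : e.card = r) (hf : f.card = r)
    (h : FormsPattern r e f {p, q}) :
    Ty r e f = Ty r p q ∨ Ty r e f = Ty r q p := by
  obtain ⟨φ, hφ, -, himg⟩ := h
  have hinj := hφ.injOn
  have key : ∀ a b : Finset ℕ, e.image φ = a → f.image φ = b → Ty r e f = Ty r a b := by
    rintro a b rfl rfl
    have hse : (e : Set ℕ) ⊆ ↑(e ∪ f) := by intro x hx; simp at hx ⊢; exact Or.inl hx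
    have hsf : (f : Set ℕ) ⊆ ↑(e ∪ f) := by intro x hx; simp at hx ⊢; exact Or.inr hx
    have ca : (e.image φ).card = r := by
      rw [Finset.card_image_of_injOn (hinj.mono hse), he]
    have cb : (f.image φ).card = r := by
      rw [Finset.card_image_of_injOn (hinj.mono hsf), hf]
    have ea : (fun i => φ (en r e i)) = en r (e.image φ) :=
      en_unique ca (fun i => Finset.mem_image_of_mem _ (en_mem he i))
        (fun i j hij => hφ (hse (en_mem he i)) (hse (en_mem he j)) (en_strictMono he hij))
    have eb : (fun i => φ (en r f i)) = en r (f.image φ) :=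
      en_unique cb (fun i => Finset.mem_image_of_mem _ (en_mem hf i))
        (fun i j hij => hφ (hsf (en_mem hf i)) (hsf (en_mem hf j)) (en_strictMono hf hij))
    funext i j
    simp only [Ty, ← ea, ← eb]
    exact propext (hφ.lt_iff_lt (hse (en_mem he i)) (hsf (en_mem hf j))).symm
  have h2 : ({e.image φ, f.image φ} : Set (Finset ℕ)) = {p, q} := by
    have := congrArg (fun s : Finset (Finset ℕ) => (s : Set (Finset ℕ))) himg
    simpa using this
  rcases Set.pair_eq_pair_iff.mp h2 with ⟨h3, h4⟩ | ⟨h3, h4⟩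
  · exact Or.inl (key _ _ h3 h4)
  · exact Or.inr (key _ _ h3 h4)

lemma T_forms {r : ℕ} {e f p q : Finset ℕ} (he : e.card = r) (hf : f.card = r)
    (hp : p.card = r) (hq : q.card = r) (hd : Disjoint e f) (hd' : Disjoint p q)
    (hu : p ∪ q = Finset.Icc 1 (2 * r))
    (h : Ty r e f = Ty r p q) : FormsPattern r e f {p, q} := by
  let E : Fin r ⊕ Fin r → ℕ := Sum.elim (en r e) (en r f)
  let G : Fin r ⊕ Fin r → ℕ := Sum.elim (en r p) (en r q)
  have hlt : ∀ u v, E u < E v ↔ G u < G v := by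
    have h1 : ∀ i j, en r e i < en r f j ↔ en r p i < en r q j := fun i j =>
      iff_of_eq (congrFun (congrFun h i) j)
    rintro (i | i) (j | j)
    · simp only [E, G, Sum.elim_inl]
      rw [(en_strictMono he).lt_iff_lt, (en_strictMono hp).lt_iff_lt]
    · exact h1 i j
    · have := h1 j i
      have h3 := en_ne he hf hd j i
      have h4 := en_ne hp hq hd' j i
      simp only [E, G, Sum.elim_inl, Sum.elim_inr]; omega
    · simp only [E, G, Sum.elim_inr]
      rw [(en_strictMono hf).lt_iff_lt, (en_strictMono hq).lt_iff_lt]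
  have hE : Function.Injective E := by
    rintro (i | i) (j | j) hij
    · rw [(en_strictMono he).injective hij]
    · exact absurd hij (en_ne he hf hd i j)
    · exact absurd hij.symm (en_ne he hf hd j i)
    · rw [(en_strictMono hf).injective hij]
  let φ := Function.extend E G 0
  have hφ : ∀ u, φ (E u) = G u := fun u => hE.extend_apply G 0 u
  have ie : e.image φ = p := by
    ext x; constructor
    · intro hx
      obtain ⟨y, hy, rfl⟩ := Finset.mem_image.mp hx
      obtain ⟨i, rfl⟩ := en_surj he hy
      have := hφ (Sum.inl i)
      simp only [E, G, Sum.elim_inl] at this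
      rw [this]; exact en_mem hp i
    · intro hx
      obtain ⟨i, rfl⟩ := en_surj hp hx
      exact Finset.mem_image.mpr ⟨en r e i, en_mem he i, hφ (Sum.inl i)⟩
  have jf : f.image φ = q := by
    ext x; constructor
    · intro hx
      obtain ⟨y, hy, rfl⟩ := Finset.mem_image.mp hx
      obtain ⟨i, rfl⟩ := en_surj hf hy
      have := hφ (Sum.inr i)
      simp only [E, G, Sum.elim_inr] at this
      rw [this]; exact en_mem hq i
    · intro hx
      obtain ⟨i, rfl⟩ := en_surj hq hx
      exact Finset.mem_image.mpr ⟨en r f i, en_mem hf i, hφ (Sum.inr i)⟩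
  have hsurj : ∀ x ∈ e ∪ f, ∃ u, E u = x := by
    intro x hx
    rcases Finset.mem_union.mp hx with hx | hx
    · obtain ⟨i, hi⟩ := en_surj he hx
      exact ⟨Sum.inl i, hi⟩
    · obtain ⟨i, hi⟩ := en_surj hf hx
      exact ⟨Sum.inr i, hi⟩
  refine ⟨φ, ?_, ?_, ?_⟩
  · intro x hx y hy hxy
    obtain ⟨u, rfl⟩ := hsurj x hx
    obtain ⟨v, rfl⟩ := hsurj y hy
    rw [hφ, hφ]; exact (hlt u v).mp hxy
  · rw [Finset.image_union, ie, jf, hu]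
  · rw [ie, jf]

/-- A matching is determined by the relative orders. -/
lemma order_det {α : Type*} (a b : α → ℕ) (M N : Finset α)
    (hbN : ∀ e ∈ N, ∀ f ∈ N, b e = b f → a e = a f)
    (haM : ∀ e ∈ M, ∀ f ∈ M, a e = a f → b e = b f)
    (aMN : ∀ e ∈ M, ∃ f ∈ N, a e = a f) (aNM : ∀ e ∈ N, ∃ f ∈ M, a e = a f)
    (bMN : ∀ e ∈ M, ∃ f ∈ N, b e = b f) (bNM : ∀ e ∈ N, ∃ f ∈ M, b e = b f)
    (H : ∀ e ∈ M, ∀ f ∈ M, ∀ e' ∈ N, ∀ f' ∈ N, a e = a e' → a f = a f' →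
      (b e < b f ↔ b e' < b f')) :
    ∀ e ∈ M, ∀ e' ∈ N, a e = a e' → b e = b e' := by
  suffices h : ∀ v, ∀ e ∈ M, b e = v → ∀ e' ∈ N, a e = a e' → b e = b e' from
    fun e he e' he' h1 => h _ e he rfl e' he' h1
  intro v
  induction v using Nat.strong_induction_on with
  | _ v ih =>
    intro e he hv e' he' hee
    rcases lt_trichotomy (b e) (b e') with h | h | h
    · obtain ⟨g', hg', hgb⟩ := bMN e he
      obtain ⟨g, hg, hga⟩ := aNM g' hg'
      have h1 := (H g hg e he g' hg' e' he' hga.symm hee).mpr (by omega)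
      have h2 := ih (b g) (by omega) g hg rfl g' hg' hga.symm
      omega
    · exact h
    · obtain ⟨f, hf, hfb⟩ := bNM e' he'
      obtain ⟨f', hf', hfa⟩ := aMN f hf
      have h1 := ih (b f) (by omega) f hf rfl f' hf' hfa
      have h2 := hbN f' hf' e' he' (by omega)
      have h3 := haM f hf e he (by omega)
      omega

/-- Noncrossing matchings are determined by the openers and closers. -/
lemma lifo_det {α : Type*} (a b : α → ℕ) (M N : Finset α)
    (hbM : ∀ e ∈ M, ∀ f ∈ M, b e = b f → a e = a f)
    (haM : ∀ e ∈ M, ∀ f ∈ M, a e = a f → b e = b f)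
    (haN : ∀ e ∈ N, ∀ f ∈ N, a e = a f → b e = b f)
    (hbN : ∀ e ∈ N, ∀ f ∈ N, b e = b f → a e = a f)
    (aMN : ∀ e ∈ M, ∃ f ∈ N, a e = a f) (aNM : ∀ e ∈ N, ∃ f ∈ M, a e = a f)
    (bMN : ∀ e ∈ M, ∃ f ∈ N, b e = b f) (bNM : ∀ e ∈ N, ∃ f ∈ M, b e = b f)
    (hab : ∀ e ∈ M, a e < b e) (habN : ∀ e ∈ N, a e < b e)
    (HM : ∀ e ∈ M, ∀ f ∈ M, a e < a f → ¬ (a f < b e ∧ b e < b f))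
    (HN : ∀ e ∈ N, ∀ f ∈ N, a e < a f → ¬ (a f < b e ∧ b e < b f))  :
    ∀ e ∈ M, ∀ e' ∈ N, a e = a e' → b e = b e' := by
  obtain ⟨B, hB⟩ : ∃ B, ∀ e ∈ M, a e ≤ B :=
    ⟨M.sup a, fun e he => Finset.le_sup (f := a) he⟩
  suffices h : ∀ v, ∀ e ∈ M, B - a e = v → ∀ e' ∈ N, a e = a e' → b e = b e' from
    fun e he e' he' h1 => h _ e he rfl e' he' h1
  intro v
  induction v using Nat.strong_induction_on with
  | _ v ih =>
    intro e he hv e' he' hee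
    have hBe := hB e he
    rcases lt_trichotomy (b e) (b e') with h | h | h
    · obtain ⟨g', hg', hgb⟩ := bMN e he
      obtain ⟨g, hg, hga⟩ := aNM g' hg'
      have hBg := hB g hg
      have := hab e he
      rcases lt_trichotomy (a g') (a e') with h1 | h1 | h1
      · have := HN g' hg' e' he' h1
        omega
      · have := haN g' hg' e' he' h1
        omega
      · have h2 := ih (B - a g) (by omega) g hg rfl g' hg' hga.symm
        have := hbM g hg e he (by omega)
        omega
    · exact h
    · obtain ⟨g, hg, hgb⟩ := bNM e' he'
      obtain ⟨g', hg', hga⟩ := aMN g hg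
      have hBg := hB g hg
      have := habN e' he'
      rcases lt_trichotomy (a g) (a e) with h1 | h1 | h1
      · have := HM g hg e he h1
        omega
      · have := haM g hg e he h1
        omega
      · have h2 := ih (B - a g) (by omega) g hg rfl g' hg' hga
        have := hbN g' hg' e' he' (by omega)
        omega

def TransT {r : ℕ} (T : Fin r → Fin r → Prop) : Prop :=
  ∀ i j k, i ≤ j → j ≤ k → SepT T i j → SepT T j k → SepT T i k

def MonoT {r : ℕ} (T : Fin r → Fin r → Prop) : Prop :=
  ∀ i i' j j', i' ≤ i → j ≤ j' → T i j → T i' j'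

lemma sep_interval {r : ℕ} {T : Fin r → Fin r → Prop} (hT : MonoT T) {i j k : Fin r}
    (hij : i ≤ j) (hjk : j ≤ k) (h : SepT T i k) : SepT T i j ∧ SepT T j k := by
  rcases h with h | h
  · exact ⟨Or.inl (hT _ _ _ _ hjk le_rfl h), Or.inl (hT _ _ _ _ le_rfl hij h)⟩
  · exact ⟨Or.inr (fun h' => h (hT _ _ _ _ le_rfl hjk h')),
      Or.inr (fun h' => h (hT _ _ _ _ hij le_rfl h'))⟩

lemma sep_sign {r : ℕ} {T : Fin r → Fin r → Prop} (hT : MonoT T) {i j : Fin r}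
    (hij : i ≤ j) (h : SepT T i j) : T i i ↔ T j j := by
  rcases h with h | h
  · exact iff_of_true (hT _ _ _ _ hij le_rfl h) (hT _ _ _ _ le_rfl hij h)
  · exact iff_of_false (fun h' => h (hT _ _ _ _ le_rfl hij h'))
      (fun h' => h (hT _ _ _ _ hij le_rfl h'))

lemma blocks {r : ℕ} {T : Fin r → Fin r → Prop} (hT : MonoT T) (htr : TransT T) :
    ∃ c : Fin r → Fin r, (∀ i, c i ≤ i) ∧ (∀ i, SepT T (c i) i) ∧
      (∀ i l, l < c i → ¬ SepT T l i) ∧ (∀ i j, i ≤ j → c i ≤ c j) ∧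
      (∀ i j, i ≤ j → (c i = c j ↔ SepT T i j)) := by
  have h1 : ∀ i : Fin r, ∃ c, c ≤ i ∧ SepT T c i ∧ ∀ l, l < c → ¬ SepT T l i := by
    intro i
    obtain ⟨c, ⟨hc1, hc2⟩, hc3⟩ := WellFounded.has_min (wellFounded_lt (α := Fin r))
      {l | l ≤ i ∧ SepT T l i} ⟨i, le_rfl, by simp only [SepT]; tauto⟩
    exact ⟨c, hc1, hc2, fun l hl hs => hc3 l ⟨hl.le.trans hc1, hs⟩ hl⟩
  choose c hc1 hc2 hc3 using h1
  have hm : ∀ i j, i ≤ j → c i ≤ c j := by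
    intro i j hij
    by_cases h : c j ≤ i
    · by_contra hlt
      exact hc3 i (c j) (not_le.mp hlt) (sep_interval hT h hij (hc2 j)).1
    · exact (hc1 i).trans (not_le.mp h).le
  refine ⟨c, hc1, hc2, hc3, hm, fun i j hij => ⟨fun h => ?_, fun h => ?_⟩⟩
  · exact (sep_interval hT (h ▸ hc1 i) hij (hc2 j)).2
  · refine le_antisymm (hm i j hij) ?_
    by_contra hlt
    exact hc3 j (c i) (not_le.mp hlt) (htr _ _ _ (hc1 i) hij (hc2 i) h)

lemma clique_Ty {r : ℕ} {p q : Finset ℕ} {K : Finset (Finset ℕ)}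
    (hK : IsClique r {({p, q} : Finset (Finset ℕ))} K) {e f : Finset ℕ} (he : e ∈ K) (hf : f ∈ K)
    (hne : e ≠ f) : Ty r e f = Ty r p q ∨ Ty r e f = Ty r q p := by
  obtain ⟨h1, h2, h3⟩ := hK
  obtain ⟨P, hP, hF⟩ := h3 e he f hf hne
  rw [Set.mem_singleton_iff] at hP
  subst hP
  exact forms_T (h1 e he) (h1 f hf) hF

lemma collectable_trans {r : ℕ} {p q : Finset ℕ} (hp : p.card = r) (hq : q.card = r)
    (hd : Disjoint p q) (hc : Collectable r {p, q}) : TransT (Ty r p q) := by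
  intro i j k hij hjk s1 s2
  obtain ⟨K, hK, hcard⟩ := hc 3
  have hsep : ∀ e ∈ K, ∀ f ∈ K, e ≠ f → ∀ i j, SepT (Ty r e f) i j ↔ SepT (Ty r p q) i j := by
    intro e he f hf hne i j
    rcases clique_Ty hK he hf hne with h | h
    · rw [h]
    · rw [h, Sep_swap hp hq hd]
  have key : ∀ x ∈ K, ∀ y ∈ K, ∀ z ∈ K, en r x j < en r y j → en r y j < en r z j →
      SepT (Ty r p q) i k := by
    intro x hx y hy z hz hxy hyz
    have nxy : x ≠ y := by rintro rfl; omega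
    have nyz : y ≠ z := by rintro rfl; omega
    have nxz : x ≠ z := by rintro rfl; omega
    have a1 := (hsep x hx y hy nxy i j).mpr s1
    have a2 := (hsep x hx y hy nxy j k).mpr s2
    have a3 := (hsep y hy z hz nyz i j).mpr s1
    have b1 := (en_strictMono (hK.1 x hx)).monotone hij
    have b2 := (en_strictMono (hK.1 y hy)).monotone hij
    have b3 := (en_strictMono (hK.1 x hx)).monotone hjk
    have b4 := (en_strictMono (hK.1 y hy)).monotone hjk
    rw [← hsep x hx z hz nxz]
    left
    simp only [SepT, Ty] at *
    omega
  obtain ⟨x, y, z, nxy, nxz, nyz, rfl⟩ := Finset.card_eq_three.mp hcard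
  have hx : x ∈ ({x, y, z} : Finset (Finset ℕ)) := by simp
  have hy : y ∈ ({x, y, z} : Finset (Finset ℕ)) := by simp
  have hz : z ∈ ({x, y, z} : Finset (Finset ℕ)) := by simp
  have e1 := en_ne (hK.1 x hx) (hK.1 y hy) (hK.2.1 x hx y hy nxy) j j
  have e2 := en_ne (hK.1 x hx) (hK.1 z hz) (hK.2.1 x hx z hz nxz) j j
  have e3 := en_ne (hK.1 y hy) (hK.1 z hz) (hK.2.1 y hy z hz nyz) j j
  rcases lt_or_gt_of_ne e1 with h1 | h1 <;> rcases lt_or_gt_of_ne e2 with h2 | h2 <;>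
    rcases lt_or_gt_of_ne e3 with h3 | h3
  · exact key x hx y hy z hz h1 h3
  · exact key x hx z hz y hy h2 h3
  · omega
  · exact key z hz x hx y hy h2 h1
  · exact key y hy x hx z hz h1 h2
  · omega
  · exact key y hy z hz x hx h3 h2
  · exact key z hz y hy x hx h3 h1

lemma lex_lt {r m m' i j : ℕ} (h : m < m') (hi : i < r) : m * r + i < m' * r + j := by
  have := Nat.mul_le_mul_right r (Nat.succ_le_of_lt h)
  rw [Nat.succ_mul] at this
  omega

lemma trans_collectable {r : ℕ} (hr : 2 ≤ r) {p q : Finset ℕ} (hp : p.card = r) (hq : q.card = r)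
    (hd : Disjoint p q) (hu : p ∪ q = Finset.Icc 1 (2 * r))
    (htr : TransT (Ty r p q)) : Collectable r {p, q} := by
  intro k
  set T := Ty r p q with hTdef
  have hT : MonoT T := fun i i' j j' h1 h2 h => Ty_mono hp hq h1 h2 h
  obtain ⟨c, hc1, hc2, hc3, hcm, hcs⟩ := blocks hT htr
  let X : ℕ → Fin r → ℕ := fun a i => if T i i then a else k - 1 - a
  let E : ℕ → Fin r → ℕ := fun a i => ((c i : ℕ) * k + X a i) * r + i
  have hX : ∀ a < k, ∀ i, X a i < k := by
    intro a ha i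
    simp only [X]; split_ifs <;> omega
  have hlt : ∀ a < k, ∀ b < k, ∀ i j, c i < c j → E a i < E b j := by
    intro a ha b hb i j hij
    exact lex_lt (lex_lt hij (hX a ha i)) i.2
  have hEm : ∀ a < k, StrictMono (E a) := by
    intro a ha i j hij
    rcases (hcm i j hij.le).lt_or_eq with h | h
    · exact hlt a ha a ha i j h
    · have hs := sep_sign hT hij.le ((hcs i j hij.le).mp h)
      have : X a i = X a j := by simp only [X, hs]
      simp only [E, h, this]
      have : (i : ℕ) < j := hij
      omega
  have hcomp : ∀ a b, a < b → b < k → ∀ i j, (E a i < E b j ↔ T i j) := by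
    intro a b hab hb i j
    rcases lt_trichotomy (c i) (c j) with h | h | h
    · refine iff_of_true (hlt a (by omega) b hb i j h) ?_
      have hij : i ≤ j := by
        by_contra h'
        exact absurd (hcm j i (not_le.mp h').le) (not_le.mpr h)
      have := mt (hcs i j hij).mpr h.ne
      simp only [SepT] at this; tauto
    · have hsgn : (T i i ↔ T j j) ∧ (T i i → T i j) ∧ (T i j → T i i) := by
        rcases le_total i j with hij | hij
        · have s := (hcs i j hij).mp h
          refine ⟨sep_sign hT hij s, hT _ _ _ _ le_rfl hij, fun h1 => ?_⟩
          rcases s with s | s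
          · exact hT _ _ _ _ hij le_rfl s
          · exact absurd h1 s
        · have s := (hcs j i hij).mp h.symm
          refine ⟨(sep_sign hT hij s).symm, fun h1 => ?_, hT _ _ _ _ le_rfl hij⟩
          rcases s with s | s
          · exact s
          · exact absurd (hT _ _ _ _ hij le_rfl h1) s
      by_cases hs : T i i
      · refine iff_of_true ?_ (hsgn.2.1 hs)
        refine lex_lt ?_ i.2
        rw [h]
        simp only [X, if_pos hs, if_pos (hsgn.1.mp hs)]
        omega
      · refine iff_of_false ?_ (mt hsgn.2.2 hs)
        refine not_lt.mpr (le_of_lt (lex_lt ?_ j.2))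
        rw [h]
        simp only [X, if_neg hs, if_neg (mt hsgn.1.mpr hs)]
        omega
    · refine iff_of_false (not_lt.mpr (hlt b hb a (by omega) j i h).le) ?_
      have hij : j ≤ i := by
        by_contra h'
        exact absurd (hcm i j (not_le.mp h').le) (not_le.mpr h)
      have := mt (hcs j i hij).mpr h.ne
      simp only [SepT] at this; tauto
  have hEne : ∀ a < k, ∀ b < k, a ≠ b → ∀ i j, E a i ≠ E b j := by
    intro a ha b hb hab i j h
    have h1 : (i : ℕ) = j := by
      have := congrArg (· % r) h
      simpa only [E, Nat.mul_add_mod', Nat.mod_eq_of_lt i.2, Nat.mod_eq_of_lt j.2] using this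
    have h2 : i = j := Fin.ext h1
    subst h2
    have h3 : X a i = X b i := by
      have h4 : ((c i : ℕ) * k + X a i) * r = ((c i : ℕ) * k + X b i) * r := by
        simp only [E] at h; omega
      have := Nat.eq_of_mul_eq_mul_right (by omega) h4
      omega
    simp only [X] at h3
    split_ifs at h3 <;> omega
  let Ed : ℕ → Finset ℕ := fun a => Finset.univ.image (E a)
  have hEc : ∀ a < k, (Ed a).card = r := by
    intro a ha
    simp only [Ed]
    rw [Finset.card_image_of_injective _ (hEm a ha).injective]; simp
  have hEn : ∀ a, ∀ ha : a < k, E a = en r (Ed a) := fun a ha =>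
    en_unique (hEc a ha) (fun i => Finset.mem_image_of_mem _ (Finset.mem_univ i)) (hEm a ha)
  have hEd : ∀ a < k, ∀ b < k, a ≠ b → Disjoint (Ed a) (Ed b) := by
    intro a ha b hb hab
    rw [Finset.disjoint_left]
    intro x hx hy
    obtain ⟨i, -, rfl⟩ := Finset.mem_image.mp hx
    obtain ⟨j, -, hj⟩ := Finset.mem_image.mp hy
    exact hEne a ha b hb hab i j hj.symm
  have hF : ∀ a b, a < b → b < k → FormsPattern r (Ed a) (Ed b) {p, q} := by
    intro a b hab hb
    refine T_forms (hEc a (by omega)) (hEc b hb) hp hq (hEd a (by omega) b hb hab.ne) hd hu ?_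
    funext i j
    have := hcomp a b hab hb i j
    rw [hEn a (by omega), hEn b hb] at this
    exact propext this
  refine ⟨(Finset.range k).image Ed, ⟨?_, ?_, ?_⟩, ?_⟩
  · intro e he
    obtain ⟨a, ha, rfl⟩ := Finset.mem_image.mp he
    exact hEc a (Finset.mem_range.mp ha)
  · intro e he f hf hne
    obtain ⟨a, ha, rfl⟩ := Finset.mem_image.mp he
    obtain ⟨b, hb, rfl⟩ := Finset.mem_image.mp hf
    exact hEd a (Finset.mem_range.mp ha) b (Finset.mem_range.mp hb) (by rintro rfl; exact hne rfl)
  · intro e he f hf hne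
    obtain ⟨a, ha, rfl⟩ := Finset.mem_image.mp he
    obtain ⟨b, hb, rfl⟩ := Finset.mem_image.mp hf
    refine ⟨_, rfl, ?_⟩
    rcases lt_trichotomy a b with h | h | h
    · exact hF a b h (Finset.mem_range.mp hb)
    · subst h; exact absurd rfl hne
    · obtain ⟨φ, h1, h2, h3⟩ := hF b a h (Finset.mem_range.mp ha)
      refine ⟨φ, ?_, ?_, ?_⟩
      · rw [Finset.union_comm]; exact h1
      · rw [Finset.union_comm]; exact h2
      · rw [Finset.pair_comm]; exact h3
  · rw [Finset.card_image_of_injOn, Finset.card_range]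
    intro a ha b hb hab
    by_contra hne
    have := hEd a (by simpa using ha) b (by simpa using hb) hne
    rw [hab, disjoint_self] at this
    have h2 := hEc b (by simpa using hb)
    rw [this] at h2
    simp at h2
    omega

lemma rank_eq {r : ℕ} {p q : Finset ℕ} (hp : p.card = r) (hq : q.card = r)
    (hd : Disjoint p q) (hu : p ∪ q = Finset.Icc 1 (2 * r)) (m : Fin r) :
    en r p m = m + 1 + (Finset.univ.filter (fun l : Fin r => en r q l < en r p m)).card := by
  have h : Finset.Icc 1 (en r p m) = (Finset.Iic m).image (en r p) ∪
      (Finset.univ.filter (fun l : Fin r => en r q l < en r p m)).image (en r q) := by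
    ext x
    have hm : en r p m ∈ Finset.Icc 1 (2 * r) := by
      rw [← hu]; exact Finset.mem_union_left _ (en_mem hp m)
    simp only [Finset.mem_Icc, Finset.mem_union, Finset.mem_image, Finset.mem_Iic,
      Finset.mem_filter, Finset.mem_univ, true_and] at hm ⊢
    constructor
    · rintro ⟨h1, h2⟩
      have hx : x ∈ p ∪ q := by rw [hu, Finset.mem_Icc]; omega
      rcases Finset.mem_union.mp hx with hx | hx
      · obtain ⟨i, rfl⟩ := en_surj hp hx
        exact Or.inl ⟨i, (en_strictMono hp).le_iff_le.mp h2, rfl⟩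
      · obtain ⟨i, rfl⟩ := en_surj hq hx
        exact Or.inr ⟨i, lt_of_le_of_ne h2 (en_ne hp hq hd m i).symm, rfl⟩
    · rintro (⟨i, hi, rfl⟩ | ⟨i, hi, rfl⟩)
      · have : en r p i ∈ Finset.Icc 1 (2 * r) := by
          rw [← hu]; exact Finset.mem_union_left _ (en_mem hp i)
        exact ⟨(Finset.mem_Icc.mp this).1, (en_strictMono hp).monotone hi⟩
      · have : en r q i ∈ Finset.Icc 1 (2 * r) := by
          rw [← hu]; exact Finset.mem_union_right _ (en_mem hq i)
        exact ⟨(Finset.mem_Icc.mp this).1, hi.le⟩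
  have hc := congrArg Finset.card h
  rw [Finset.card_union_of_disjoint, Finset.card_image_of_injective _ (en_strictMono hp).injective,
    Finset.card_image_of_injective _ (en_strictMono hq).injective, Nat.card_Icc,
    Fin.card_Iic] at hc
  · omega
  · rw [Finset.disjoint_left]
    intro x hx hy
    obtain ⟨i, -, rfl⟩ := Finset.mem_image.mp hx
    obtain ⟨j, -, hj⟩ := Finset.mem_image.mp hy
    exact en_ne hp hq hd i j hj.symm

def CutT {r : ℕ} (T : Fin r → Fin r → Prop) (n : ℕ) : Prop :=
  ∀ l m : Fin r, l.val < n → n ≤ m.val → ¬ SepT T l m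

lemma card_lt_fin {r n : ℕ} (h : n ≤ r) (f : Fin r → Prop) [DecidablePred f]
    (hf : ∀ l : Fin r, f l ↔ l.val < n) :
    (Finset.univ.filter f).card = n := by
  have : (Finset.univ.filter f) = (Finset.univ.filter (fun l : Fin r => l.val < n)) := by
    ext l; simp [hf]
  rw [this, Fin.card_filter_val_lt]
  omega

lemma block_pos {r : ℕ} {p q : Finset ℕ} (hp : p.card = r) (hq : q.card = r)
    (hd : Disjoint p q) (hu : p ∪ q = Finset.Icc 1 (2 * r)) {i t : ℕ} (ht : 0 < t)
    (hn : i + t ≤ r)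
    (ci : CutT (Ty r p q) i) (cn : CutT (Ty r p q) (i + t))
    (hs : SepT (Ty r p q) ⟨i, by omega⟩ ⟨i + t - 1, by omega⟩)
    (hii : Ty r p q ⟨i, by omega⟩ ⟨i, by omega⟩) (u : ℕ) (hut : u < t) :
    2 * i + u + 1 ∈ p ∧ 2 * i + (t + u) + 1 ∈ q := by
  set T := Ty r p q with hTdef
  have hT : MonoT T := fun i i' j j' h1 h2 h => Ty_mono hp hq h1 h2 h
  have hu' : q ∪ p = Finset.Icc 1 (2 * r) := by rw [Finset.union_comm]; exact hu
  have hin : ∀ l m : Fin r, i ≤ l.val → l.val < i + t → i ≤ m.val → m.val < i + t → T m l := by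
    intro l m h1 h2 h3 h4
    have h5 : T ⟨i + t - 1, by omega⟩ ⟨i, by omega⟩ := by
      rcases hs with h | h
      · exact h
      · refine absurd (hT _ _ _ _ le_rfl ?_ hii) h
        exact Fin.mk_le_mk.mpr (by omega)
    refine hT _ _ _ _ ?_ ?_ h5
    · exact Fin.le_def.mpr (by simp; omega)
    · exact Fin.le_def.mpr h1
  let m : Fin r := ⟨i + u, by omega⟩
  have hm1 : i ≤ m.val := by simp [m]
  have hm2 : m.val < i + t := by simp [m]; omega
  have hmv : m.val = i + u := rfl
  constructor
  · have h := rank_eq hp hq hd hu m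
    rw [card_lt_fin (n := i) (by omega)] at h
    · have := en_mem hp m
      rw [h] at this
      convert this using 1
      omega
    · intro l
      have e1 : en r q l < en r p m ↔ ¬ T m l := Ty_swap hp hq hd l m
      rw [e1]
      constructor
      · intro h1
        by_contra h2
        by_cases h3 : l.val < i + t
        · exact h1 (hin l m (by omega) h3 hm1 hm2)
        · have := cn m l hm2 (by omega)
          simp only [SepT] at this; tauto
      · intro h1
        have := ci l m h1 hm1
        simp only [SepT] at this; tauto
  · have h := rank_eq hq hp hd.symm hu' m
    rw [card_lt_fin (n := i + t) (by omega)] at h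
    · have := en_mem hq m
      rw [h] at this
      convert this using 1
      omega
    · intro l
      have e1 : en r p l < en r q m ↔ T l m := Iff.rfl
      rw [e1]
      constructor
      · intro h1
        by_contra h2
        have := cn m l hm2 (by omega)
        simp only [SepT] at this; tauto
      · intro h1
        by_cases h3 : i ≤ l.val
        · exact hin m l hm1 hm2 h3 h1
        · have := ci l m (by omega) hm1
          simp only [SepT] at this; tauto

lemma split_append {w : List Bool} {lam : List ℕ} (h : IsBlockSplitting w lam) (t : ℕ)
    (ht : 1 ≤ t) (b : Bool) :
    IsBlockSplitting (w ++ (List.replicate t b ++ List.replicate t !b)) (lam ++ [t]) := by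
  obtain ⟨h1, bs, h2, h3⟩ := h
  refine ⟨?_, bs ++ [b], by simp [h2], ?_⟩
  · intro s hs
    rcases List.mem_append.mp hs with hs | hs
    · exact h1 s hs
    · simp at hs; omega
  · rw [List.zipWith_append h2.symm, h3]
    simp

noncomputable def wd (p : Finset ℕ) (n : ℕ) : List Bool :=
  (List.range n).map (fun j => decide (j + 1 ∈ p))

lemma wd_block {r : ℕ} {p q : Finset ℕ} (hp : p.card = r) (hq : q.card = r)
    (hd : Disjoint p q) (hu : p ∪ q = Finset.Icc 1 (2 * r)) {i t : ℕ} (ht : 0 < t)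
    (hn : i + t ≤ r)
    (ci : CutT (Ty r p q) i) (cn : CutT (Ty r p q) (i + t))
    (hs : SepT (Ty r p q) ⟨i, by omega⟩ ⟨i + t - 1, by omega⟩) :
    ∃ b : Bool, wd p (2 * (i + t)) = wd p (2 * i) ++ (List.replicate t b ++ List.replicate t !b) := by
  suffices h : ∃ b : Bool, ∀ u < t, decide (2 * i + u + 1 ∈ p) = b ∧
      decide (2 * i + (t + u) + 1 ∈ p) = !b by
    obtain ⟨b, hb⟩ := h
    refine ⟨b, ?_⟩
    have : 2 * (i + t) = 2 * i + (t + t) := by ring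
    rw [this]
    simp only [wd]
    rw [List.range_add, List.map_append, List.range_add, List.map_append, List.map_append]
    congr 1
    congr 1
    · rw [List.eq_replicate_iff]
      refine ⟨by simp, ?_⟩
      intro x hx
      simp only [List.map_map, List.mem_map, List.mem_range, Function.comp] at hx
      obtain ⟨u, hu, rfl⟩ := hx
      exact (hb u hu).1
    · rw [List.eq_replicate_iff]
      refine ⟨by simp, ?_⟩
      intro x hx
      simp only [List.map_map, List.mem_map, List.mem_range, Function.comp] at hx
      obtain ⟨u, hu, rfl⟩ := hx
      exact (hb u hu).2
  by_cases hii : Ty r p q ⟨i, by omega⟩ ⟨i, by omega⟩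
  · refine ⟨true, fun u hut => ?_⟩
    obtain ⟨h1, h2⟩ := block_pos hp hq hd hu ht hn ci cn hs hii u hut
    have h3 := Finset.disjoint_right.mp hd h2
    simp [h1, h3]
  · refine ⟨false, fun u hut => ?_⟩
    have hu' : q ∪ p = Finset.Icc 1 (2 * r) := by rw [Finset.union_comm]; exact hu
    obtain ⟨h1, h2⟩ := block_pos hq hp hd.symm hu' ht hn
      (fun l m h1 h2 => by rw [Sep_swap hp hq hd]; exact ci l m h1 h2)
      (fun l m h1 h2 => by rw [Sep_swap hp hq hd]; exact cn l m h1 h2)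
      (by rw [Sep_swap hp hq hd]; exact hs)
      (by rw [Ty_swap hp hq hd]; exact hii) u hut
    have h3 := Finset.disjoint_right.mp hd h1
    simp [h2, h3]

lemma common_split {r : ℕ} {p q p' q' : Finset ℕ} (hp : p.card = r) (hq : q.card = r)
    (hd : Disjoint p q) (hu : p ∪ q = Finset.Icc 1 (2 * r))
    (hp' : p'.card = r) (hq' : q'.card = r)
    (hd' : Disjoint p' q') (hu' : p' ∪ q' = Finset.Icc 1 (2 * r))
    (htr : TransT (Ty r p q))
    (hS : ∀ i j : Fin r, i ≤ j → (SepT (Ty r p q) i j ↔ SepT (Ty r p' q') i j)) :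
    ∀ n ≤ r, CutT (Ty r p q) n →
      ∃ lam, IsBlockSplitting (wd p (2 * n)) lam ∧ IsBlockSplitting (wd p' (2 * n)) lam := by
  have hT : MonoT (Ty r p q) := fun i i' j j' h1 h2 h => Ty_mono hp hq h1 h2 h
  obtain ⟨c, hc1, hc2, hc3, hcm, hcs⟩ := blocks hT htr
  have hcut : ∀ n, CutT (Ty r p q) n → CutT (Ty r p' q') n := by
    intro n h l m h1 h2
    rw [← hS l m (Fin.le_def.mpr (by omega))]
    exact h l m h1 h2
  intro n
  induction n using Nat.strong_induction_on with
  | _ n ih =>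
    intro hn cn
    rcases Nat.eq_zero_or_pos n with h0 | h0
    · subst h0
      exact ⟨[], ⟨by simp, [], rfl, by simp [wd]⟩, ⟨by simp, [], rfl, by simp [wd]⟩⟩
    · let e : Fin r := ⟨n - 1, by omega⟩
      have hce : (c e).val ≤ n - 1 := hc1 e
      obtain ⟨i, hi⟩ : ∃ i, i = (c e).val := ⟨_, rfl⟩
      obtain ⟨t, rfl⟩ : ∃ t, n = i + t := ⟨n - i, by omega⟩
      have hci : c e = ⟨i, by omega⟩ := Fin.ext hi.symm
      have hs : SepT (Ty r p q) ⟨i, by omega⟩ ⟨i + t - 1, by omega⟩ := hci ▸ hc2 e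
      have ci : CutT (Ty r p q) i := by
        intro l m h1 h2 h3
        by_cases h4 : m.val < i + t
        · have h5 : l ≤ c e := Fin.le_def.mpr (by omega)
          have h6 : c e ≤ m := Fin.le_def.mpr (by omega)
          have h7 := (sep_interval hT h5 h6 h3).1
          exact hc3 e l (Fin.lt_def.mpr (by omega)) (htr _ _ _ h5 (hc1 e) h7 (hc2 e))
        · exact cn l m (by omega) (by omega) h3
      obtain ⟨lam, l1, l2⟩ := ih i (by omega) (by omega) ci
      obtain ⟨b, hb⟩ := wd_block hp hq hd hu (by omega) hn ci cn hs
      obtain ⟨b', hb'⟩ := wd_block hp' hq' hd' hu' (by omega) hn (hcut _ ci) (hcut _ cn)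
        ((hS _ _ (Fin.le_def.mpr (by simp; omega))).mp hs)
      refine ⟨lam ++ [t], ?_, ?_⟩
      · rw [hb]; exact split_append l1 t (by omega) b
      · rw [hb']; exact split_append l2 t (by omega) b'

lemma matching_two {r : ℕ} (hr : 2 ≤ r) {P : Finset (Finset ℕ)} (hP : IsOrderedMatching r 2 P) :
    ∃ p q : Finset ℕ, P = {p, q} ∧ p.card = r ∧ q.card = r ∧ Disjoint p q ∧
      p ∪ q = Finset.Icc 1 (2 * r) ∧ 1 ∈ p := by
  obtain ⟨h1, h2, h3, h4⟩ := hP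
  obtain ⟨p, q, hne, rfl⟩ := Finset.card_eq_two.mp h1
  have hu : p ∪ q = Finset.Icc 1 (2 * r) := by
    rw [mul_comm 2 r, ← h4]; simp
  have h5 : 1 ∈ p ∪ q := by rw [hu, Finset.mem_Icc]; omega
  have cp := h2 p (by simp)
  have cq := h2 q (by simp)
  have dd := h3 p (by simp) q (by simp) hne
  rcases Finset.mem_union.mp h5 with h | h
  · exact ⟨p, q, rfl, cp, cq, dd, hu, h⟩
  · exact ⟨q, p, Finset.pair_comm _ _, cq, cp, dd.symm, by rw [Finset.union_comm]; exact hu, h⟩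

lemma patternWord_eq {r : ℕ} {p q : Finset ℕ} (hd : Disjoint p q) (h1 : 1 ∈ p) :
    patternWord r {p, q} = wd p (2 * r) := by
  have h2 := Finset.disjoint_left.mp hd h1
  simp only [patternWord, wd]
  apply List.map_congr_left
  intro j _
  have : (∃ e ∈ ({p, q} : Finset (Finset ℕ)), 1 ∈ e ∧ j + 1 ∈ e) ↔ j + 1 ∈ p := by
    simp [h1, h2]
  simp only [this]

lemma mismatch_sep {r : ℕ} (hr : 2 ≤ r) {p q p' q' : Finset ℕ} (hp : p.card = r) (hq : q.card = r)
    (hd : Disjoint p q) (hu : p ∪ q = Finset.Icc 1 (2 * r)) (h1 : 1 ∈ p)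
    (hp' : p'.card = r) (hq' : q'.card = r)
    (hd' : Disjoint p' q') (hu' : p' ∪ q' = Finset.Icc 1 (2 * r)) (h1' : 1 ∈ p')
    (hm : Mismatch r {p, q} {p', q'}) :
    ∃ i j : Fin r, i ≤ j ∧ ¬ (SepT (Ty r p q) i j ↔ SepT (Ty r p' q') i j) := by
  by_contra hcon
  push Not at hcon
  have hcon' : ∀ i j : Fin r, i ≤ j → (SepT (Ty r p q) i j ↔ SepT (Ty r p' q') i j) := by
    intro i j hij
    have := hcon i j hij
    tauto
  have tr1 : TransT (Ty r p q) → TransT (Ty r p' q') := by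
    intro h i j k hij hjk s1 s2
    rw [← hcon' _ _ (hij.trans hjk)]
    exact h i j k hij hjk ((hcon' _ _ hij).mpr s1) ((hcon' _ _ hjk).mpr s2)
  have tr2 : TransT (Ty r p' q') → TransT (Ty r p q) := by
    intro h i j k hij hjk s1 s2
    rw [hcon' _ _ (hij.trans hjk)]
    exact h i j k hij hjk ((hcon' _ _ hij).mp s1) ((hcon' _ _ hjk).mp s2)
  rcases hm.2 with ⟨a, b⟩ | ⟨a, b⟩ | ⟨a, b, c⟩
  · exact b (trans_collectable hr hp' hq' hd' hu' (tr1 (collectable_trans hp hq hd a)))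
  · exact a (trans_collectable hr hp hq hd hu (tr2 (collectable_trans hp' hq' hd' b)))
  · apply c
    obtain ⟨lam, l1, l2⟩ := common_split hp hq hd hu hp' hq' hd' hu'
      (collectable_trans hp hq hd a) hcon' r le_rfl (fun l m _ h => by have := m.2; omega)
    refine ⟨lam, ?_, ?_⟩
    · rw [HasComposition, patternWord_eq hd h1]; exact l1
    · rw [HasComposition, patternWord_eq hd' h1']; exact l2

lemma trace_letter {r k : ℕ} {M : Finset (Finset ℕ)} (hM : IsOrderedMatching r k M)
    {e : Finset ℕ} (he : e ∈ M) (i : Fin r) :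
    ((Finset.Icc 1 (r * k)).filter
      (fun x => x ≤ en r e i ∧ ∃ f ∈ M, en r e i ∈ f ∧ x ∈ f)).card = i + 1 := by
  obtain ⟨h1, h2, h3, h4⟩ := hM
  have : (Finset.Icc 1 (r * k)).filter
      (fun x => x ≤ en r e i ∧ ∃ f ∈ M, en r e i ∈ f ∧ x ∈ f) = (Finset.Iic i).image (en r e) := by
    ext x
    simp only [Finset.mem_filter, Finset.mem_image, Finset.mem_Iic]
    constructor
    · rintro ⟨-, hx, f, hf, h5, h6⟩
      have hfe : e = f := by
        by_contra hne
        exact Finset.disjoint_left.mp (h3 e he f hf hne) (en_mem (h2 e he) i) h5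
      subst hfe
      obtain ⟨j, rfl⟩ := en_surj (h2 e he) h6
      exact ⟨j, (en_strictMono (h2 e he)).le_iff_le.mp hx, rfl⟩
    · rintro ⟨j, hj, rfl⟩
      refine ⟨?_, (en_strictMono (h2 e he)).monotone hj, e, he, en_mem (h2 e he) i,
        en_mem (h2 e he) j⟩
      rw [← h4]
      exact Finset.mem_biUnion.mpr ⟨e, he, en_mem (h2 e he) j⟩
  rw [this, Finset.card_image_of_injective _ (en_strictMono (h2 e he)).injective, Fin.card_Iic]

lemma trace_level {r k : ℕ} {M N : Finset (Finset ℕ)} (hM : IsOrderedMatching r k M)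
    (hN : IsOrderedMatching r k N) (ht : trace r k M = trace r k N) (i : Fin r) :
    ∀ e ∈ M, ∃ f ∈ N, en r e i = en r f i := by
  intro e he
  have hx : en r e i ∈ Finset.Icc 1 (r * k) := by
    rw [← hM.2.2.2]
    exact Finset.mem_biUnion.mpr ⟨e, he, en_mem (hM.2.1 e he) i⟩
  have hx' := hx
  rw [← hN.2.2.2] at hx'
  obtain ⟨f, hf, hxf⟩ := Finset.mem_biUnion.mp hx'
  obtain ⟨j, hj⟩ := en_surj (hN.2.1 f hf) hxf
  refine ⟨f, hf, ?_⟩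
  rw [Finset.mem_Icc] at hx
  simp only [trace] at ht
  have h1 := List.map_inj_left.mp ht (en r e i - 1) (by rw [List.mem_range]; omega)
  have h2 : en r e i - 1 + 1 = en r e i := by omega
  simp only [h2] at h1
  have h3 := trace_letter hM he i
  have h4 := trace_letter hN hf j
  rw [hj] at h4
  have h5 : (i : ℕ) + 1 = j + 1 := by rw [← h3, ← h4]; exact h1
  have : i = j := Fin.ext (by omega)
  rw [this, hj, ← this]

lemma recon {r k : ℕ} {p q p' q' : Finset ℕ} (hp : p.card = r) (hq : q.card = r)
    (hd : Disjoint p q) (hp' : p'.card = r) (hq' : q'.card = r) (hd' : Disjoint p' q')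
    {i j : Fin r} (hij : i ≤ j) (hs : SepT (Ty r p q) i j) (hs' : ¬ SepT (Ty r p' q') i j)
    {M N : Finset (Finset ℕ)} (hM : IsOrderedMatching r k M) (hN : IsOrderedMatching r k N)
    (hMT : ∀ e ∈ M, ∀ f ∈ M, e ≠ f → Ty r e f = Ty r p q ∨ Ty r e f = Ty r q p ∨
      Ty r e f = Ty r p' q' ∨ Ty r e f = Ty r q' p')
    (hNT : ∀ e ∈ N, ∀ f ∈ N, e ≠ f → Ty r e f = Ty r p q ∨ Ty r e f = Ty r q p ∨
      Ty r e f = Ty r p' q' ∨ Ty r e f = Ty r q' p')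
    (ht : trace r k M = trace r k N) : M = N := by
  have hij' : i < j := by
    refine lt_of_le_of_ne hij ?_
    rintro rfl
    apply hs'; simp only [SepT]; tauto
  have LMN := trace_level hM hN ht
  have LNM := trace_level hN hM ht.symm
  have inj : ∀ K : Finset (Finset ℕ), IsOrderedMatching r k K → ∀ m l : Fin r, ∀ e ∈ K, ∀ f ∈ K,
      en r e m = en r f m → en r e l = en r f l := by
    intro K hK m l e he f hf h
    by_contra h2
    have hne : e ≠ f := by rintro rfl; exact h2 rfl
    exact en_ne (hK.2.1 e he) (hK.2.1 f hf) (hK.2.2.1 e he f hf hne) m m h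
  have inj2 : ∀ K : Finset (Finset ℕ), IsOrderedMatching r k K → ∀ m : Fin r, ∀ e ∈ K, ∀ f ∈ K,
      en r e m = en r f m → e = f := by
    intro K hK m e he f hf h
    by_contra hne
    exact en_ne (hK.2.1 e he) (hK.2.1 f hf) (hK.2.2.1 e he f hf hne) m m h
  have hT : MonoT (Ty r p q) := fun i i' j j' h1 h2 h => Ty_mono hp hq h1 h2 h
  have sg := sep_sign hT hij hs
  have hs2 : Ty r p' q' i j ∧ ¬ Ty r p' q' j i := by
    simp only [SepT] at hs'; tauto
  -- the levels `i` and `j` are matched identically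
  have hA : ∀ e ∈ M, ∀ e' ∈ N, en r e i = en r e' i → en r e j = en r e' j := by
    by_cases hc : Ty r p' q' i i ↔ Ty r p' q' j j
    · have fifo : ∀ K : Finset (Finset ℕ), IsOrderedMatching r k K →
          (∀ e ∈ K, ∀ f ∈ K, e ≠ f → Ty r e f = Ty r p q ∨ Ty r e f = Ty r q p ∨
          Ty r e f = Ty r p' q' ∨ Ty r e f = Ty r q' p') →
          ∀ e ∈ K, ∀ f ∈ K, (en r e j < en r f j ↔ en r e i < en r f i) := by
        intro K hK hKT e he f hf
        by_cases hne : e = f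
        · subst hne; simp
        · have : Ty r e f j j ↔ Ty r e f i i := by
            rcases hKT e he f hf hne with h | h | h | h <;> rw [h]
            · exact sg.symm
            · rw [Ty_swap hp hq hd, Ty_swap hp hq hd, sg]
            · exact hc.symm
            · rw [Ty_swap hp' hq' hd', Ty_swap hp' hq' hd', hc]
          exact this
      refine order_det (fun e => en r e i) (fun e => en r e j) M N (inj N hN j i) (inj M hM i j)
        (LMN i) (LNM i) (LMN j) (LNM j) ?_
      intro e he f hf e' he' f' hf' h1 h2
      rw [fifo M hM hMT e he f hf, fifo N hN hNT e' he' f' hf', h1, h2]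
    · have lifo : ∀ K : Finset (Finset ℕ), IsOrderedMatching r k K →
          (∀ e ∈ K, ∀ f ∈ K, e ≠ f → Ty r e f = Ty r p q ∨ Ty r e f = Ty r q p ∨
          Ty r e f = Ty r p' q' ∨ Ty r e f = Ty r q' p') →
          ∀ e ∈ K, ∀ f ∈ K, en r e i < en r f i →
            ¬ (en r f i < en r e j ∧ en r e j < en r f j) := by
        intro K hK hKT e he f hf hlt
        have hne : e ≠ f := by rintro rfl; omega
        have n1 := en_ne (hK.2.1 e he) (hK.2.1 f hf) (hK.2.2.1 e he f hf hne)
        have m1 := en_strictMono (hK.2.1 e he) hij'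
        have m2 := en_strictMono (hK.2.1 f hf) hij'
        have sepcase : SepT (Ty r e f) i j →
            ¬ (en r f i < en r e j ∧ en r e j < en r f j) := by
          simp only [SepT, Ty]
          omega
        have nestcase : ¬ (Ty r e f i i ↔ Ty r e f j j) →
            ¬ (en r f i < en r e j ∧ en r e j < en r f j) := by
          simp only [Ty]
          have := n1 j j
          omega
        rcases hKT e he f hf hne with h | h | h | h
        · apply sepcase; rw [h]; exact hs
        · apply sepcase; rw [h, Sep_swap hp hq hd]; exact hs
        · apply nestcase; rw [h]; exact hc
        · apply nestcase; rw [h, Ty_swap hp' hq' hd', Ty_swap hp' hq' hd']; tauto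
      exact lifo_det (fun e => en r e i) (fun e => en r e j) M N (inj M hM j i) (inj M hM i j)
        (inj N hN i j) (inj N hN j i)
        (LMN i) (LNM i) (LMN j) (LNM j)
        (fun e he => en_strictMono (hM.2.1 e he) hij')
        (fun e he => en_strictMono (hN.2.1 e he) hij')
        (lifo M hM hMT) (lifo N hN hNT)
  -- hence the patterns of corresponding pairs agree, and so do all levels
  have hB : ∀ m : Fin r, ∀ e ∈ M, ∀ e' ∈ N, en r e i = en r e' i → en r e m = en r e' m := by
    intro m
    refine order_det (fun e => en r e i) (fun e => en r e m) M N (inj N hN m i) (inj M hM i m)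
        (LMN i) (LNM i) (LMN m) (LNM m) ?_
    intro e he f hf e' he' f' hf' h1 h2
    by_cases hne : e = f
    · subst hne
      have : e' = f' := inj2 N hN i e' he' f' hf' (by omega)
      subst this
      simp
    · have hne' : e' ≠ f' := by
        rintro rfl
        exact hne (inj2 M hM i e he f hf (by omega))
      have h3 := hA e he e' he' h1
      have h4 := hA f hf f' hf' h2
      have hsep : SepT (Ty r e f) i j ↔ SepT (Ty r e' f') i j := by
        simp only [SepT, Ty, h1, h2, h3, h4]
      have hsgn : Ty r e f i i ↔ Ty r e' f' i i := by
        simp only [Ty, h1, h2]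
      have hTT : Ty r e f = Ty r e' f' := by
        rcases hMT e he f hf hne with h | h | h | h <;>
          rcases hNT e' he' f' hf' hne' with h' | h' | h' | h' <;>
          rw [h, h'] at hsep hsgn <;> rw [h, h'] <;>
          (try simp only [Ty_swap hp hq hd, Ty_swap hp' hq' hd', Sep_swap hp hq hd,
            Sep_swap hp' hq' hd'] at hsep hsgn) <;> tauto
      exact iff_of_eq (congrFun (congrFun hTT m) m)
  apply Finset.eq_of_subset_of_card_le
  · intro e he
    obtain ⟨e', he', h⟩ := LMN i e he
    have : e = e' := by
      ext x
      constructor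
      · intro hx
        obtain ⟨m, rfl⟩ := en_surj (hM.2.1 e he) hx
        rw [hB m e he e' he' h]; exact en_mem (hN.2.1 e' he') m
      · intro hx
        obtain ⟨m, rfl⟩ := en_surj (hN.2.1 e' he') hx
        rw [← hB m e he e' he' h]; exact en_mem (hM.2.1 e he) m
    rw [this]; exact he'
  · rw [hM.1, hN.1]

lemma clique_Ty2 {r : ℕ} {p q p' q' : Finset ℕ} {K : Finset (Finset ℕ)}
    (hK : IsClique r {({p, q} : Finset (Finset ℕ)), ({p', q'} : Finset (Finset ℕ))} K) :
    ∀ e ∈ K, ∀ f ∈ K, e ≠ f → Ty r e f = Ty r p q ∨ Ty r e f = Ty r q p ∨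
      Ty r e f = Ty r p' q' ∨ Ty r e f = Ty r q' p' := by
  intro e he f hf hne
  obtain ⟨h1, h2, h3⟩ := hK
  obtain ⟨P, hP, hF⟩ := h3 e he f hf hne
  rcases hP with hP | hP
  · subst hP
    have := forms_T (h1 e he) (h1 f hf) hF
    tauto
  · rw [Set.mem_singleton_iff] at hP
    subst hP
    have := forms_T (h1 e he) (h1 f hf) hF
    tauto

/-- **Lemma.** For a mismatched pair `{P, Q}` of distinct `r`-patterns, distinct
`{P,Q}`-cliques of the same size `k` partitioning `[rk]` have distinct traces. -/
theorem mismatch_reconstructible (r : ℕ) (hr : 2 ≤ r) (P Q : Finset (Finset ℕ))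
    (hP : IsOrderedMatching r 2 P) (hQ : IsOrderedMatching r 2 Q)
    (hmis : Mismatch r P Q) (k : ℕ) (M N : Finset (Finset ℕ))
    (hM : IsOrderedMatching r k M) (hN : IsOrderedMatching r k N)
    (hMc : IsClique r {P, Q} M) (hNc : IsClique r {P, Q} N) (hMN : M ≠ N) :
    trace r k M ≠ trace r k N := by
  intro ht
  apply hMN
  obtain ⟨p, q, rfl, hp, hq, hd, hu, h1⟩ := matching_two hr hP
  obtain ⟨p', q', rfl, hp', hq', hd', hu', h1'⟩ := matching_two hr hQ
  obtain ⟨i, j, hij, hs⟩ := mismatch_sep hr hp hq hd hu h1 hp' hq' hd' hu' h1' hmis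
  by_cases h : SepT (Ty r p q) i j
  · exact recon hp hq hd hp' hq' hd' hij h (by tauto) hM hN (clique_Ty2 hMc) (clique_Ty2 hNc) ht
  · rw [Set.pair_comm] at hMc hNc
    exact recon hp' hq' hd' hp hq hd hij (by by_contra h9; exact hs (iff_of_false h h9)) h hM hN (clique_Ty2 hMc) (clique_Ty2 hNc) ht
end

section
/- Given integers r ≥ 2, t ≥ 2r, and n ≥ t, let W₁, ..., W_r be disjoint subsets of [rn] with |W_i| = t for each 1 ≤ i ≤ r. Then the probability that no edge of RM_n^(r) spans all of W₁, ..., W_r is at most exp(−(1/(2r)^r)·(t^r / n^(r−1))). -/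
open Finset
open scoped Classical

/-- Partition-matchings of `V` into `r`-sets, all of whose edges satisfy `Q`. -/
noncomputable def mset (r : ℕ) (Q : Finset ℕ → Prop) (V : Finset ℕ) : Finset (Finset (Finset ℕ)) :=
  V.powerset.powerset.filter (fun M => (∀ e ∈ M, e.card = r) ∧
    (∀ e ∈ M, ∀ f ∈ M, e ≠ f → Disjoint e f) ∧ M.biUnion id = V ∧ ∀ e ∈ M, Q e)

lemma mem_mset {r : ℕ} {Q : Finset ℕ → Prop} {V : Finset ℕ} {M : Finset (Finset ℕ)} :
    M ∈ mset r Q V ↔ (∀ e ∈ M, e.card = r) ∧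
    (∀ e ∈ M, ∀ f ∈ M, e ≠ f → Disjoint e f) ∧ M.biUnion id = V ∧ ∀ e ∈ M, Q e := by
  unfold mset
  rw [Finset.mem_filter]
  constructor
  · exact fun h => h.2
  · intro h
    refine ⟨?_, h⟩
    rw [Finset.mem_powerset]
    intro e he
    rw [Finset.mem_powerset, ← h.2.2.1]
    exact Finset.subset_biUnion_of_mem id he

/-- edges at `w` -/
noncomputable def edgesAt (r : ℕ) (V : Finset ℕ) (w : ℕ) : Finset (Finset ℕ) :=
  (V.powersetCard r).filter (fun e => w ∈ e)

lemma card_mset_rec (r : ℕ) (Q : Finset ℕ → Prop) (V : Finset ℕ) (w : ℕ) (hw : w ∈ V) :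
    (mset r Q V).card = ∑ e ∈ (edgesAt r V w).filter Q, (mset r Q (V \ e)).card := by
  rw [← Finset.card_sigma]
  symm
  have key : ∀ a ∈ ((edgesAt r V w).filter Q).sigma (fun e => mset r Q (V \ e)),
      a.1 ⊆ V ∧ a.1.card = r ∧ w ∈ a.1 ∧ Q a.1 ∧ (∀ e ∈ a.2, e.card = r) ∧
    (∀ e ∈ a.2, ∀ f ∈ a.2, e ≠ f → Disjoint e f) ∧ a.2.biUnion id = V \ a.1 ∧ (∀ e ∈ a.2, Q e) ∧
    (∀ e ∈ a.2, Disjoint e a.1) := by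
    rintro ⟨e, M⟩ h
    simp only [Finset.mem_sigma, Finset.mem_filter, edgesAt, Finset.mem_powersetCard, mem_mset] at h
    obtain ⟨⟨⟨⟨h1, h2⟩, h3⟩, h4⟩, h5, h6, h7, h8⟩ := h
    refine ⟨h1, h2, h3, h4, h5, h6, h7, h8, ?_⟩
    intro f hf
    have : f ⊆ V \ e := by
      rw [← h7]; exact Finset.subset_biUnion_of_mem id hf
    exact Finset.disjoint_of_subset_left this Finset.sdiff_disjoint
  refine Finset.card_bij (fun a _ => insert a.1 a.2) ?_ ?_ ?_
  · intro a ha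
    obtain ⟨h1, h2, h3, h4, h5, h6, h7, h8, h9⟩ := key a ha
    rw [mem_mset]
    refine ⟨?_, ?_, ?_, ?_⟩
    · intro e he
      rcases Finset.mem_insert.1 he with rfl | he
      · exact h2
      · exact h5 e he
    · intro e he f hf hne
      rcases Finset.mem_insert.1 he with rfl | he
      · rcases Finset.mem_insert.1 hf with rfl | hf
        · exact absurd rfl hne
        · exact (h9 f hf).symm
      · rcases Finset.mem_insert.1 hf with rfl | hf
        · exact h9 e he
        · exact h6 e he f hf hne
    · rw [Finset.biUnion_insert, h7]
      exact Finset.union_sdiff_of_subset h1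
    · intro e he
      rcases Finset.mem_insert.1 he with rfl | he
      · exact h4
      · exact h8 e he
  · intro a ha b hb hab
    have ka := key a ha
    have kb := key b hb
    obtain ⟨e, M⟩ := a
    obtain ⟨f, N⟩ := b
    obtain ⟨h1, h2, h3, h4, h5, h6, h7, h8, h9⟩ := ka
    obtain ⟨g1, g2, g3, g4, g5, g6, g7, g8, g9⟩ := kb
    dsimp only at *
    have heM : e ∉ M := fun h => (Finset.disjoint_left.1 (h9 e h) h3) h3
    have hfN : f ∉ N := fun h => (Finset.disjoint_left.1 (g9 f h) g3) g3
    have hef : e = f := by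
      have : e ∈ insert f N := by rw [← hab]; exact Finset.mem_insert_self _ _
      rcases Finset.mem_insert.1 this with h | h
      · exact h
      · exact absurd g3 (Finset.disjoint_left.1 (g9 e h) h3)
    subst hef
    have : M = N := by
      rw [← Finset.erase_insert heM, hab, Finset.erase_insert hfN]
    subst this
    rfl
  · intro M hM
    obtain ⟨h1, h2, h3, h4⟩ := mem_mset.1 hM
    have hw' := hw
    rw [← h3, Finset.mem_biUnion] at hw'
    obtain ⟨e, he, hwe⟩ := hw'
    refine ⟨⟨e, M.erase e⟩, ?_, Finset.insert_erase he⟩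
    simp only [Finset.mem_sigma, Finset.mem_filter, edgesAt, Finset.mem_powersetCard, mem_mset]
    refine ⟨⟨⟨⟨?_, h1 e he⟩, hwe⟩, h4 e he⟩, ?_, ?_, ?_, ?_⟩
    · rw [← h3]; exact Finset.subset_biUnion_of_mem id he
    · exact fun f hf => h1 f (Finset.mem_of_mem_erase hf)
    · exact fun f hf g hg => h2 f (Finset.mem_of_mem_erase hf) g (Finset.mem_of_mem_erase hg)
    · ext x
      rw [← h3]
      simp only [Finset.mem_biUnion, Finset.mem_erase, Finset.mem_sdiff, id]
      constructor
      · rintro ⟨f, ⟨hfe, hf⟩, hx⟩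
        exact ⟨⟨f, hf, hx⟩, Finset.disjoint_left.1 (h2 f hf e he hfe) hx⟩
      · rintro ⟨⟨f, hf, hx⟩, hxe⟩
        exact ⟨f, ⟨fun h => hxe (h ▸ hx), hf⟩, hx⟩
    · exact fun f hf => h4 f (Finset.mem_of_mem_erase hf)

lemma card_edgesAt (r : ℕ) (hr : 1 ≤ r) (V : Finset ℕ) (w : ℕ) (hw : w ∈ V) :
    (edgesAt r V w).card = (V.card - 1).choose (r - 1) := by
  rw [← Finset.card_erase_of_mem hw, ← Finset.card_powersetCard]
  refine Finset.card_bij' (fun e _ => e.erase w) (fun e _ => insert w e) ?_ ?_ ?_ ?_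
  · intro e he
    simp only [edgesAt, Finset.mem_filter, Finset.mem_powersetCard] at he ⊢
    exact ⟨Finset.erase_subset_erase _ he.1.1, by rw [Finset.card_erase_of_mem he.2, he.1.2]⟩
  · intro e he
    simp only [edgesAt, Finset.mem_filter, Finset.mem_powersetCard] at he ⊢
    have hwe : w ∉ e := fun h => by simpa using he.1 h
    refine ⟨⟨?_, ?_⟩, Finset.mem_insert_self _ _⟩
    · exact Finset.insert_subset hw (he.1.trans (Finset.erase_subset _ _))
    · rw [Finset.card_insert_of_notMem hwe, he.2]; omega
  · intro e he
    simp only [edgesAt, Finset.mem_filter, Finset.mem_powersetCard] at he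
    exact Finset.insert_erase he.2
  · intro e he
    simp only [Finset.mem_powersetCard] at he
    have hwe : w ∉ e := fun h => by simpa using he.1 h
    exact Finset.erase_insert hwe

/-- number of matchings of size `m` -/
def numM (r : ℕ) : ℕ → ℕ
  | 0 => 1
  | m + 1 => (r * (m + 1) - 1).choose (r - 1) * numM r m

lemma card_sdiff_edge {r m : ℕ} {V : Finset ℕ} {w : ℕ} {e : Finset ℕ}
    (hV : V.card = r * (m + 1)) (he : e ∈ edgesAt r V w) : (V \ e).card = r * m := by
  simp only [edgesAt, Finset.mem_filter, Finset.mem_powersetCard] at he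
  rw [Finset.card_sdiff_of_subset he.1.1, hV, he.1.2, Nat.mul_succ]; omega

lemma card_mset_true (r : ℕ) (hr : 1 ≤ r) (m : ℕ) : ∀ V : Finset ℕ, V.card = r * m →
    (mset r (fun _ => True) V).card = numM r m := by
  induction m with
  | zero =>
    intro V hV
    have hV0 : V = ∅ := by simpa using hV
    subst hV0
    rw [numM, Finset.card_eq_one]
    refine ⟨∅, ?_⟩
    ext M
    rw [mem_mset, Finset.mem_singleton]
    constructor
    · rintro ⟨h1, h2, h3, -⟩
      by_contra hne
      obtain ⟨e, he⟩ := Finset.nonempty_iff_ne_empty.2 hne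
      have h := Finset.subset_biUnion_of_mem id he
      rw [h3] at h
      have := Finset.card_le_card h
      simp only [id, h1 e he, Finset.card_empty] at this
      omega
    · rintro rfl
      simp
  | succ m ih =>
    intro V hV
    have hne : V.Nonempty := by
      rw [← Finset.card_pos, hV]; positivity
    obtain ⟨w, hw⟩ := hne
    rw [card_mset_rec r _ V w hw, Finset.filter_true, Finset.sum_congr rfl
      (fun e he => ih _ (card_sdiff_edge hV he)), Finset.sum_const, card_edgesAt r hr V w hw, hV,
      numM, smul_eq_mul]

lemma card_spanning (r : ℕ) (W : Fin r → Finset ℕ) (hdisj : ∀ i j, i ≠ j → Disjoint (W i) (W j))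
    (V : Finset ℕ) (i₀ : Fin r) (w : ℕ) (hw : w ∈ W i₀ ∩ V) (s : ℝ) (hs : 0 ≤ s)
    (hW : ∀ i, s ≤ ((W i ∩ V).card : ℝ)) :
    s ^ (r - 1) ≤ (((edgesAt r V w).filter (fun e => ∀ i, (e ∩ W i).card = 1)).card : ℝ) := by
  set U : Fin r → Finset ℕ := fun i => if i = i₀ then {w} else W i ∩ V with hU
  have hUW : ∀ i, U i ⊆ W i ∩ V := by
    intro i
    simp only [hU]
    split_ifs with h
    · subst h; simpa using hw
    · exact subset_rfl
  have hint : ∀ f ∈ Fintype.piFinset U, ∀ i, Finset.univ.image f ∩ W i = {f i} := by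
    intro f hf i
    rw [Fintype.mem_piFinset] at hf
    have hm : ∀ j, f j ∈ W j := fun j => (Finset.mem_inter.1 (hUW j (hf j))).1
    ext x
    simp only [Finset.mem_inter, Finset.mem_image, Finset.mem_univ, true_and, Finset.mem_singleton]
    constructor
    · rintro ⟨⟨j, rfl⟩, hx⟩
      by_cases hji : j = i
      · rw [hji]
      · exact absurd hx (Finset.disjoint_left.1 (hdisj j i hji) (hm j))
    · rintro rfl
      exact ⟨⟨i, rfl⟩, hm i⟩
  have hle : (Fintype.piFinset U).card ≤
      ((edgesAt r V w).filter (fun e => ∀ i, (e ∩ W i).card = 1)).card := by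
    refine Finset.card_le_card_of_injOn (fun f => Finset.univ.image f) ?_ ?_
    · intro f hf
      have hf' := Finset.mem_coe.1 hf
      have hfm := Fintype.mem_piFinset.1 hf'
      have hm : ∀ j, f j ∈ W j ∩ V := fun j => hUW j (hfm j)
      have hinj : Function.Injective f := by
        intro a b hab
        by_contra hne
        exact Finset.disjoint_left.1 (hdisj a b hne) (Finset.mem_inter.1 (hm a)).1
          (hab ▸ (Finset.mem_inter.1 (hm b)).1)
      simp only [Finset.coe_filter, Set.mem_ofPred_eq, edgesAt, Finset.mem_filter,
        Finset.mem_powersetCard]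
      refine ⟨⟨⟨?_, ?_⟩, ?_⟩, ?_⟩
      · intro x hx
        obtain ⟨j, -, rfl⟩ := Finset.mem_image.1 hx
        exact (Finset.mem_inter.1 (hm j)).2
      · rw [Finset.card_image_of_injective _ hinj]; simp
      · refine Finset.mem_image.2 ⟨i₀, Finset.mem_univ _, ?_⟩
        simpa [hU] using hfm i₀
      · intro i
        rw [hint f hf' i, Finset.card_singleton]
    · intro f hf g hg hfg
      funext i
      have h1 := hint f (Finset.mem_coe.1 hf) i
      have h2 := hint g (Finset.mem_coe.1 hg) i
      dsimp only at hfg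
      rw [hfg, h2] at h1
      exact (Finset.singleton_injective h1).symm
  refine le_trans ?_ (Nat.cast_le.2 hle)
  rw [Fintype.card_piFinset, ← Finset.mul_prod_erase _ _ (Finset.mem_univ i₀)]
  have h1 : (U i₀).card = 1 := by simp [hU]
  rw [h1, one_mul]
  push_cast
  have : s ^ (r - 1) = ∏ i ∈ Finset.univ.erase i₀, s := by
    rw [Finset.prod_const, Finset.card_erase_of_mem (Finset.mem_univ _)]; simp
  rw [this]
  refine Finset.prod_le_prod (fun _ _ => hs) ?_
  intro i hi
  simp only [hU, if_neg (Finset.ne_of_mem_erase hi)]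
  exact hW i

lemma main_bound (r n : ℕ) (hr : 1 ≤ r) (hn : 1 ≤ n) (W : Fin r → Finset ℕ)
    (hdisj : ∀ i j, i ≠ j → Disjoint (W i) (W j)) (s : ℝ) (hs : 0 < s) (k : ℕ) :
    ∀ (m : ℕ) (V : Finset ℕ), m ≤ n → V.card = r * m →
    (∀ i, s + ((k : ℝ) - 1) * r ≤ ((W i ∩ V).card : ℝ)) →
    ((mset r (fun e => ¬ ∀ i, (e ∩ W i).card = 1) V).card : ℝ) ≤
      Real.exp (-(s / (r * n)) ^ (r - 1)) ^ k * numM r m := by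
  induction k with
  | zero =>
    intro m V hm hV _
    rw [pow_zero, one_mul, Nat.cast_le, ← card_mset_true r hr m V hV]
    refine Finset.card_le_card ?_
    intro M hM
    rw [mem_mset] at hM ⊢
    exact ⟨hM.1, hM.2.1, hM.2.2.1, fun _ _ => trivial⟩
  | succ k ih =>
    intro m V hm hV hW
    have hrpos : (0 : ℝ) < r := by exact_mod_cast hr
    have hnpos : (0 : ℝ) < n := by exact_mod_cast hn
    have hWs : ∀ i, s ≤ ((W i ∩ V).card : ℝ) := by
      intro i
      refine le_trans ?_ (hW i)
      push_cast
      have : (0 : ℝ) ≤ (k : ℝ) * r := by positivity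
      linarith
    let i₀ : Fin r := ⟨0, hr⟩
    have hne : (W i₀ ∩ V).Nonempty := by
      rw [← Finset.card_pos]
      exact_mod_cast lt_of_lt_of_le hs (hWs i₀)
    obtain ⟨w, hw⟩ := hne
    have hwV := (Finset.mem_inter.1 hw).2
    obtain _ | m := m
    · have : V = ∅ := by simpa using hV
      subst this; simp at hwV
    have hrec : (mset r (fun e => ¬ ∀ i, (e ∩ W i).card = 1) V).card =
        ∑ e ∈ (edgesAt r V w).filter (fun e => ¬ ∀ i, (e ∩ W i).card = 1),
          (mset r (fun e => ¬ ∀ i, (e ∩ W i).card = 1) (V \ e)).card := by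
      rw [card_mset_rec r _ V w hwV]
      congr!
    rw [hrec]
    push_cast
    set q := Real.exp (-(s / (r * n)) ^ (r - 1)) with hq
    set E := edgesAt r V w with hE
    have hstep : ∀ e ∈ E.filter (fun e => ¬ ∀ i, (e ∩ W i).card = 1),
        ((mset r (fun e => ¬ ∀ i, (e ∩ W i).card = 1) (V \ e)).card : ℝ) ≤ q ^ k * numM r m := by
      intro e he
      have heE := (Finset.mem_filter.1 he).1
      refine ih m (V \ e) (by omega) (card_sdiff_edge hV heE) ?_
      intro i
      have hec : e.card = r := by
        simp only [hE, edgesAt, Finset.mem_filter, Finset.mem_powersetCard] at heE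
        exact heE.1.2
      have h1 : (W i ∩ V).card ≤ (W i ∩ (V \ e)).card + r := by
        rw [← hec]
        refine le_trans (Finset.card_le_card ?_) (Finset.card_union_le _ _)
        intro x hx
        simp only [Finset.mem_inter, Finset.mem_union, Finset.mem_sdiff] at hx ⊢
        tauto
      have h2 : ((W i ∩ V).card : ℝ) ≤ (W i ∩ (V \ e)).card + r := by exact_mod_cast h1
      have h3 := hW i
      push_cast at h3
      linarith
    refine le_trans (Finset.sum_le_sum hstep) ?_
    rw [Finset.sum_const, nsmul_eq_mul]
    have hsplit := Finset.card_filter_add_card_filter_not (s := E)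
      (fun e => ∀ i, (e ∩ W i).card = 1)
    have hEc : E.card = (r * (m + 1) - 1).choose (r - 1) := by
      rw [hE, card_edgesAt r hr V w hwV, hV]
    have hspan := card_spanning r W hdisj V i₀ w hw s hs.le hWs
    rw [← hE] at hspan
    have hsplit' : ((E.filter (fun e => ∀ i, (e ∩ W i).card = 1)).card : ℝ) +
        (E.filter (fun e => ¬ ∀ i, (e ∩ W i).card = 1)).card = E.card := by exact_mod_cast hsplit
    have hEle : (E.card : ℝ) ≤ ((r : ℝ) * n) ^ (r - 1) := by
      rw [hEc]
      refine le_trans (Nat.cast_le.2 (Nat.choose_le_pow _ _)) ?_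
      push_cast
      have h1 : r * (m + 1) - 1 ≤ r * n := le_trans (Nat.sub_le _ _) (Nat.mul_le_mul_left _ hm)
      have h2 : ((r * (m + 1) - 1 : ℕ) : ℝ) ≤ (r : ℝ) * n := by exact_mod_cast h1
      gcongr
    have hcount : ((E.filter (fun e => ¬ ∀ i, (e ∩ W i).card = 1)).card : ℝ) ≤ E.card * q := by
      set p := (s / (r * n)) ^ (r - 1) with hp
      have hp0 : 0 ≤ p := by positivity
      have h1 : p * (E.card : ℝ) ≤ s ^ (r - 1) := by
        calc p * (E.card : ℝ) ≤ p * ((r : ℝ) * n) ^ (r - 1) := by gcongr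
          _ = s ^ (r - 1) := by
            rw [hp, ← mul_pow]; congr 1; field_simp
      have h2 : 1 - p ≤ q := by
        have := Real.add_one_le_exp (-p)
        rw [hq]; linarith
      have h3 : (E.card : ℝ) * (1 - p) ≤ E.card * q := by gcongr
      nlinarith
    calc _ ≤ ((E.card : ℝ) * q) * (q ^ k * numM r m) := by
            refine mul_le_mul_of_nonneg_right hcount ?_
            positivity
      _ = _ := by
        rw [numM, ← hEc]; push_cast; ring

lemma matching_card {r n : ℕ} (hr : 1 ≤ r) {M : Finset (Finset ℕ)}
    (h1 : ∀ e ∈ M, e.card = r) (h2 : ∀ e ∈ M, ∀ f ∈ M, e ≠ f → Disjoint e f)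
    (h3 : M.biUnion id = Finset.Icc 1 (r * n)) : M.card = n := by
  have h := Finset.card_biUnion (s := M) (t := id) (fun e he f hf hne => h2 e he f hf hne)
  rw [h3, Finset.sum_congr rfl (fun e he => (h1 e he : (id e).card = r)), Finset.sum_const,
    Nat.card_Icc, smul_eq_mul, Nat.add_sub_cancel, mul_comm] at h
  exact (Nat.eq_of_mul_eq_mul_right hr h).symm

lemma filter_matchingFamilies (r n : ℕ) (hr : 1 ≤ r) (Q : Finset ℕ → Prop) :
    (matchingFamilies r n).filter (fun M => ∀ e ∈ M, Q e) = mset r Q (Finset.Icc 1 (r * n)) := by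
  ext M
  unfold matchingFamilies mset
  simp only [Finset.mem_filter, IsOrderedMatching]
  constructor
  · rintro ⟨⟨h0, -, h1, h2, h3⟩, h4⟩
    exact ⟨h0, h1, h2, h3, h4⟩
  · rintro ⟨h0, h1, h2, h3, h4⟩
    exact ⟨⟨h0, matching_card hr h1 h2 h3, h1, h2, h3⟩, h4⟩

/-- **Lemma.** For disjoint sets `W₁, …, W_r ⊆ [rn]` of size `t` each (`t ≥ 2r`, `n ≥ t`),
the probability that no edge of `RM_n^(r)` spans all of them is at most
`exp(−(1/(2r)^r)·t^r/n^(r−1))`. -/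
theorem spanning_edge_probability (r t n : ℕ) (hr : 2 ≤ r) (ht : 2 * r ≤ t) (hn : t ≤ n)
    (W : Fin r → Finset ℕ)
    (hsub : ∀ i, W i ⊆ Finset.Icc 1 (r * n))
    (hdisj : ∀ i j, i ≠ j → Disjoint (W i) (W j))
    (hcard : ∀ i, (W i).card = t) :
    prob r n (fun M => ¬ ∃ e ∈ M, ∀ i, (e ∩ W i).card = 1)
      ≤ Real.exp (-(1 / (2 * (r : ℝ)) ^ r * ((t : ℝ) ^ r / (n : ℝ) ^ (r - 1)))) := by
  have hr1 : 1 ≤ r := by omega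
  have hn1 : 1 ≤ n := by omega
  have hrpos : (0 : ℝ) < r := by exact_mod_cast hr1
  have hnpos : (0 : ℝ) < n := by exact_mod_cast hn1
  have htpos : (0 : ℝ) < t := by
    have : 0 < t := by omega
    exact_mod_cast this
  have hVc : (Finset.Icc 1 (r * n)).card = r * n := by simp
  have hden : (matchingFamilies r n).card = numM r n := by
    rw [← card_mset_true r hr1 n _ hVc, ← filter_matchingFamilies r n hr1]
    congr 1
    simp
  have hnum : ∀ d : DecidablePred (fun M : Finset (Finset ℕ) =>
        ¬ ∃ e ∈ M, ∀ i, (e ∩ W i).card = 1),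
      @Finset.filter _ (fun M => ¬ ∃ e ∈ M, ∀ i, (e ∩ W i).card = 1) d (matchingFamilies r n) =
      mset r (fun e => ¬ ∀ i, (e ∩ W i).card = 1) (Finset.Icc 1 (r * n)) := by
    intro d
    rw [← filter_matchingFamilies r n hr1]
    ext M
    simp only [Finset.mem_filter, not_exists, not_and]
  set K := ⌈(t : ℝ) / (2 * r)⌉₊ with hK
  have hK1 : (t : ℝ) / (2 * r) ≤ K := Nat.le_ceil _
  have hK2 : (K : ℝ) < (t : ℝ) / (2 * r) + 1 := Nat.ceil_lt_add_one (by positivity)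
  have hmain := main_bound r n hr1 hn1 W hdisj ((t : ℝ) / 2) (by positivity) K n _ le_rfl hVc (by
    intro i
    rw [Finset.inter_eq_left.2 (hsub i), hcard i]
    have h1 : ((K : ℝ) - 1) * r ≤ (t : ℝ) / (2 * r) * r := by
      apply mul_le_mul_of_nonneg_right _ hrpos.le
      linarith
    have h2 : (t : ℝ) / (2 * r) * r = t / 2 := by field_simp
    linarith)
  unfold prob
  rw [hden, hnum]
  refine le_trans (div_le_of_le_mul₀ (Nat.cast_nonneg _) (by positivity) hmain) ?_
  rw [← Real.exp_nat_mul, Real.exp_le_exp]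
  have hp0 : (0 : ℝ) ≤ ((t : ℝ) / 2 / (r * n)) ^ (r - 1) := by positivity
  have heq : 1 / (2 * (r : ℝ)) ^ r * ((t : ℝ) ^ r / (n : ℝ) ^ (r - 1)) =
      (t : ℝ) / (2 * r) * ((t : ℝ) / 2 / (r * n)) ^ (r - 1) := by
    obtain ⟨r', rfl⟩ : ∃ r', r = r' + 1 := ⟨r - 1, by omega⟩
    rw [Nat.add_sub_cancel, show (t : ℝ) / 2 / (((r' + 1 : ℕ) : ℝ) * n) =
      t / ((2 * ((r' + 1 : ℕ) : ℝ)) * n) by field_simp, div_pow, mul_pow, pow_succ, pow_succ (t : ℝ)]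
    field_simp
    rw [mul_pow, mul_pow]
    ring
  rw [heq]
  have := mul_le_mul_of_nonneg_right hK1 hp0
  linarith
end
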